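/- Let n ≥ 5 and let Z ∈ ℝ^{n×4} be totally positive with rows Z_1,…,Z_n, indexed cyclically so that Z_{n+1} = Z_1 and Z_0 = Z_n. Let i, j be residues modulo n with {i−1,i,i+1} ∩ {j,j+1} = ∅ (computed modulo n). Let X ∈ ℝ^{2×n} be a totally nonnegative matrix of rank 2 with rank(X·Z) = 2, and suppose that the three determinants det(two rows of X·Z, Z_{i−1}, Z_i), det(two rows of X·Z, Z_i, Z_{i+1}) and det(two rows of X·Z, Z_j, Z_{j+1}) all vanish (each being the determinant of the 4×4 matrix whose rows are the two rows of X·Z followed by the indicated rows of Z). Then Z_i lies in the row span of X·Z. -/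

import Mathlib

/-!
Write `p a b = X 0 a * X 1 b - X 0 b * X 1 a`. Cauchy–Binet expands the bracket
`⟨(X Z) Z_k Z_{k+1}⟩` as the sum over `a < b` of `p a b * ⟨Z_a Z_b Z_k Z_{k+1}⟩`. The minors `p a b`
are nonnegative, and total positivity of `Z` makes the brackets with `a, b ∉ {k, k+1}` nonzero of
a common sign (positive, or negative when `k, k+1` wraps around), the others being zero. If the
bracket vanishes, then every term does, so `p a b ≠ 0` forces `{a, b}` to meet `{k, k+1}`
(`minor_support`).

With `k = i-1, i, j`, any nonzero `p a b` therefore has `{a, b} = {i, c}` with `c ∈ {j, j+1}`. One such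
`c` exists because `X` has rank 2, and then
`X 1 c • (X Z)_0 - X 0 c • (X Z)_1 = ∑ a, p a c • Z_a = p i c • Z_i`.
-/

/-- The determinant of the 4×4 matrix with the given four rows. -/
noncomputable def det4 (a b c d : Fin 4 → ℝ) : ℝ :=
  Matrix.det (Matrix.of ![a, b, c, d])

/-- `Z ∈ ℝ^{n×4}` is totally positive: every `4×4` minor formed by rows `i₁<i₂<i₃<i₄`
is positive. -/
def IsTotallyPositive4 {n : ℕ} (Z : Matrix (Fin n) (Fin 4) ℝ) : Prop :=
  ∀ r : Fin 4 → Fin n, StrictMono r → 0 < ((Z.submatrix r id).det)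

/-- `X ∈ ℝ^{2×n}` is totally nonnegative: every `2×2` minor formed by columns `i<j`
is nonnegative. -/
def IsTotallyNonneg2 {n : ℕ} (X : Matrix (Fin 2) (Fin n) ℝ) : Prop :=
  ∀ i j : Fin n, i < j → 0 ≤ X 0 i * X 1 j - X 0 j * X 1 i

theorem det4_add_left (u u' v c d : Fin 4 → ℝ) :
    det4 (u + u') v c d = det4 u v c d + det4 u' v c d := by
  simp [det4, Matrix.det_succ_row_zero, Fin.sum_univ_succ, Fin.succAbove]
  ring

theorem det4_smul_left (t : ℝ) (u v c d : Fin 4 → ℝ) :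
    det4 (t • u) v c d = t * det4 u v c d := by
  simp [det4, Matrix.det_succ_row_zero, Fin.sum_univ_succ, Fin.succAbove]
  ring

theorem det4_swap_first (u v c d : Fin 4 → ℝ) : det4 u v c d = -det4 v u c d := by
  simp [det4, Matrix.det_succ_row_zero, Fin.sum_univ_succ, Fin.succAbove]
  ring

theorem det4_swap_mid (u v c d : Fin 4 → ℝ) : det4 u v c d = -det4 u c v d := by
  simp [det4, Matrix.det_succ_row_zero, Fin.sum_univ_succ, Fin.succAbove]
  ring

theorem det4_swap_last (u v c d : Fin 4 → ℝ) : det4 u v c d = -det4 u v d c := by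
  simp [det4, Matrix.det_succ_row_zero, Fin.sum_univ_succ, Fin.succAbove]
  ring

theorem det4_sum_left {n : ℕ} (f : Fin n → ℝ) (Z : Matrix (Fin n) (Fin 4) ℝ)
    (v c d : Fin 4 → ℝ) :
    det4 (∑ a, f a • Z a) v c d = ∑ a, f a * det4 (Z a) v c d := by
  let L : (Fin 4 → ℝ) →ₗ[ℝ] ℝ :=
    { toFun := fun u => det4 u v c d
      map_add' := fun u u' => det4_add_left u u' v c d
      map_smul' := fun t u => det4_smul_left t u v c d }
  have h : L (∑ a, f a • Z a) = ∑ a, f a * L (Z a) := by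
    simp [map_sum]
  exact h

theorem mul_row {n : ℕ} (X : Matrix (Fin 2) (Fin n) ℝ) (Z : Matrix (Fin n) (Fin 4) ℝ)
    (r : Fin 2) : (X * Z) r = ∑ a, X r a • Z a := by
  ext q
  simp [Matrix.mul_apply, Finset.sum_apply]

/-- Cauchy–Binet for the bracket of `X * Z`, summed over ordered pairs. -/
theorem two_mul_det4 {n : ℕ} (X : Matrix (Fin 2) (Fin n) ℝ) (Z : Matrix (Fin n) (Fin 4) ℝ)
    (c d : Fin 4 → ℝ) :
    2 * det4 ((X * Z) 0) ((X * Z) 1) c d =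
      ∑ a, ∑ b, (X 0 a * X 1 b - X 0 b * X 1 a) * det4 (Z a) (Z b) c d := by
  have h : det4 ((X * Z) 0) ((X * Z) 1) c d =
      ∑ a, ∑ b, X 0 a * X 1 b * det4 (Z a) (Z b) c d := by
    rw [mul_row X Z 0, mul_row X Z 1, det4_sum_left]
    refine Finset.sum_congr rfl fun a _ => ?_
    rw [det4_swap_first, det4_sum_left, ← Finset.sum_neg_distrib, Finset.mul_sum]
    refine Finset.sum_congr rfl fun b _ => ?_
    rw [det4_swap_first (Z a)]
    ring
  have h' : det4 ((X * Z) 0) ((X * Z) 1) c d =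
      ∑ a, ∑ b, -(X 0 b * X 1 a * det4 (Z a) (Z b) c d) := by
    rw [h, Finset.sum_comm]
    refine Finset.sum_congr rfl fun a _ => Finset.sum_congr rfl fun b _ => ?_
    rw [det4_swap_first]
    ring
  rw [two_mul]
  nth_rewrite 1 [h]
  rw [h', ← Finset.sum_add_distrib]
  refine Finset.sum_congr rfl fun a _ => ?_
  rw [← Finset.sum_add_distrib]
  exact Finset.sum_congr rfl fun b _ => by ring

theorem det4_pos {n : ℕ} {Z : Matrix (Fin n) (Fin 4) ℝ} (hZ : IsTotallyPositive4 Z)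
    {a b c d : Fin n} (hab : a < b) (hbc : b < c) (hcd : c < d) :
    0 < det4 (Z a) (Z b) (Z c) (Z d) := by
  have h := hZ ![a, b, c, d] (by
    rw [Fin.strictMono_iff_lt_succ]
    intro t
    fin_cases t <;> simpa)
  convert h using 1
  unfold det4
  congr 1
  ext t q
  fin_cases t <;> rfl

theorem val_add_one_cases {n : ℕ} [NeZero n] (hn : 5 ≤ n) (k : Fin n) :
    (k + 1).val = k.val + 1 ∨ (k.val = n - 1 ∧ (k + 1).val = 0) := by
  have h1 : ((1 : Fin n)).val = 1 := by
    rw [Fin.val_one', Nat.mod_eq_of_lt (by omega)]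
  have hk := k.isLt
  rw [Fin.val_add, h1]
  rcases Nat.lt_or_ge (k.val + 1) n with h | h
  · exact Or.inl (Nat.mod_eq_of_lt h)
  · right
    have : k.val + 1 = n := by omega
    exact ⟨by omega, by rw [this, Nat.mod_self]⟩

/-- The brackets `⟨Z_a Z_b Z_k Z_{k+1}⟩` with `a < b` outside `{k, k+1}` have a common sign. -/
theorem exists_sign {n : ℕ} [NeZero n] (hn : 5 ≤ n) {Z : Matrix (Fin n) (Fin 4) ℝ}
    (hZ : IsTotallyPositive4 Z) (k : Fin n) :
    ∃ s : ℝ, ∀ a b : Fin n, a < b → a ≠ k → a ≠ k + 1 → b ≠ k → b ≠ k + 1 →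
      0 < s * det4 (Z a) (Z b) (Z k) (Z (k + 1)) := by
  rcases val_add_one_cases hn k with h | ⟨hk, h⟩
  · refine ⟨1, fun a b hab ha ha' hb hb' => ?_⟩
    rw [one_mul]
    generalize k + 1 = m at *
    have hkm : k < m := by omega
    rcases lt_or_gt_of_ne hb with hbk | hbk
    · exact det4_pos hZ hab hbk hkm
    have hmb : m < b := by omega
    rcases lt_or_gt_of_ne ha with hak | hak
    · rw [det4_swap_mid, det4_swap_last, neg_neg]
      exact det4_pos hZ hak hkm hmb
    · have hma : m < a := by omega
      rw [det4_swap_mid, det4_swap_first, det4_swap_last, det4_swap_mid]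
      simpa only [neg_neg] using det4_pos hZ hkm hma hab
  · refine ⟨-1, fun a b hab ha ha' hb hb' => ?_⟩
    generalize k + 1 = m at *
    have hma : m < a := by omega
    have hbk : b < k := by omega
    rw [det4_swap_last, det4_swap_mid, det4_swap_first]
    simpa only [neg_neg, neg_one_mul] using det4_pos hZ hma hab hbk

/-- If `⟨(X Z) Z_k Z_{k+1}⟩ = 0`, every nonzero minor of `X` uses column `k` or `k + 1`. -/
theorem minor_support {n : ℕ} [NeZero n] (hn : 5 ≤ n) {Z : Matrix (Fin n) (Fin 4) ℝ}
    (hZ : IsTotallyPositive4 Z) {X : Matrix (Fin 2) (Fin n) ℝ} (hX : IsTotallyNonneg2 X)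
    (k : Fin n) (h : det4 ((X * Z) 0) ((X * Z) 1) (Z k) (Z (k + 1)) = 0) (a b : Fin n)
    (hp : X 0 a * X 1 b - X 0 b * X 1 a ≠ 0) :
    a = k ∨ a = k + 1 ∨ b = k ∨ b = k + 1 := by
  obtain ⟨s, hs⟩ := exists_sign hn hZ k
  by_contra! hne
  obtain ⟨ha, ha', hb, hb'⟩ := hne
  -- A bracket with a repeated row vanishes.
  have hzero : ∀ u v : Fin n, u = v ∨ u = k ∨ u = k + 1 ∨ v = k ∨ v = k + 1 →
      det4 (Z u) (Z v) (Z k) (Z (k + 1)) = 0 := by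
    intro u v huv
    unfold det4
    rcases huv with rfl | rfl | rfl | rfl | rfl
    · exact Matrix.det_zero_of_row_eq (i := 0) (j := 1) (by decide) rfl
    · exact Matrix.det_zero_of_row_eq (i := 0) (j := 2) (by decide) rfl
    · exact Matrix.det_zero_of_row_eq (i := 0) (j := 3) (by decide) rfl
    · exact Matrix.det_zero_of_row_eq (i := 1) (j := 2) (by decide) rfl
    · exact Matrix.det_zero_of_row_eq (i := 1) (j := 3) (by decide) rfl
  have hlt : ∀ u v : Fin n, u < v → 0 ≤ s * det4 (Z u) (Z v) (Z k) (Z (k + 1)) := by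
    intro u v huv
    by_cases hc : u = k ∨ u = k + 1 ∨ v = k ∨ v = k + 1
    · rw [hzero u v (Or.inr hc), mul_zero]
    · push Not at hc
      exact (hs u v huv hc.1 hc.2.1 hc.2.2.1 hc.2.2.2).le
  have hnn : ∀ u v : Fin n, 0 ≤ (X 0 u * X 1 v - X 0 v * X 1 u) *
      (s * det4 (Z u) (Z v) (Z k) (Z (k + 1))) := by
    intro u v
    rcases lt_trichotomy u v with huv | huv | huv
    · exact mul_nonneg (hX u v huv) (hlt u v huv)
    · rw [hzero u v (Or.inl huv), mul_zero, mul_zero]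
    · have := mul_nonneg (hX v u huv) (hlt v u huv)
      rw [det4_swap_first]
      linarith
  have hsum : ∑ u, ∑ v, (X 0 u * X 1 v - X 0 v * X 1 u) *
      (s * det4 (Z u) (Z v) (Z k) (Z (k + 1))) = 0 := by
    have h2 := two_mul_det4 X Z (Z k) (Z (k + 1))
    rw [h, mul_zero] at h2
    calc _ = s * ∑ u, ∑ v, (X 0 u * X 1 v - X 0 v * X 1 u) *
          det4 (Z u) (Z v) (Z k) (Z (k + 1)) := by
          simp only [Finset.mul_sum]
          exact Finset.sum_congr rfl fun u _ => Finset.sum_congr rfl fun v _ => by ring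
      _ = 0 := by rw [← h2, mul_zero]
  have hrow := (Finset.sum_eq_zero_iff_of_nonneg
    fun u _ => Finset.sum_nonneg fun v _ => hnn u v).1 hsum a (Finset.mem_univ a)
  have hterm := (Finset.sum_eq_zero_iff_of_nonneg fun v _ => hnn a v).1 hrow b (Finset.mem_univ b)
  have hs0 := (mul_eq_zero.1 hterm).resolve_left hp
  rcases lt_trichotomy a b with hab | rfl | hab
  · exact (hs a b hab ha ha' hb hb').ne' hs0
  · exact hp (sub_self _)
  · have := hs b a hab hb hb' ha ha'
    rw [det4_swap_first] at hs0
    linarith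

theorem exists_minor_ne_zero {n : ℕ} (X : Matrix (Fin 2) (Fin n) ℝ) (hrk : X.rank = 2) :
    ∃ a b, X 0 a * X 1 b - X 0 b * X 1 a ≠ 0 := by
  by_contra! h
  have hli : LinearIndependent ℝ X.row := by
    rw [linearIndependent_iff_card_eq_finrank_span, Set.finrank, ← Matrix.rank_eq_finrank_span_row,
      hrk, Fintype.card_fin]
  have hpair := LinearIndependent.pair_iff.1
    (show LinearIndependent ℝ ![X 0, X 1] by
      convert hli using 1
      ext t q
      fin_cases t <;> rfl)
  have hX0 : X 0 = 0 := by
    ext c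
    have := (hpair (X 1 c) (-X 0 c) (by
      ext a
      have := h a c
      simp only [Pi.add_apply, Pi.smul_apply, smul_eq_mul, Pi.zero_apply]
      linarith)).2
    simpa using this
  exact one_ne_zero (hpair 1 0 (by simp [hX0])).1

/-- For `n ≥ 5`, `Z` totally positive (cyclically indexed rows), residues
`i, j` with `{i-1,i,i+1} ∩ {j,j+1} = ∅`, and `X ∈ ℝ^{2×n}` totally nonnegative of rank 2 with
`rank(X·Z) = 2`: if the brackets `⟨(X·Z) Z_{i-1} Z_i⟩`, `⟨(X·Z) Z_i Z_{i+1}⟩` and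
`⟨(X·Z) Z_j Z_{j+1}⟩` all vanish, then `Z_i` lies in the row span of `X·Z`. -/
theorem stmt4 (n : ℕ) [NeZero n] (hn : 5 ≤ n)
    (Z : Matrix (Fin n) (Fin 4) ℝ) (hZ : IsTotallyPositive4 Z)
    (i j : Fin n)
    (hij : ({i - 1, i, i + 1} : Finset (Fin n)) ∩ {j, j + 1} = ∅)
    (X : Matrix (Fin 2) (Fin n) ℝ) (hX : IsTotallyNonneg2 X)
    (hrkX : X.rank = 2) (hrkXZ : (X * Z).rank = 2)
    (h1 : det4 ((X * Z) 0) ((X * Z) 1) (Z (i - 1)) (Z i) = 0)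
    (h2 : det4 ((X * Z) 0) ((X * Z) 1) (Z i) (Z (i + 1)) = 0)
    (h3 : det4 ((X * Z) 0) ((X * Z) 1) (Z j) (Z (j + 1)) = 0) :
    Z i ∈ Submodule.span ℝ ({(X * Z) 0, (X * Z) 1} : Set (Fin 4 → ℝ)) := by
  have hne : i - 1 ≠ i + 1 := by
    intro h
    have h2 : i = i + 1 + 1 := by rw [← h, sub_add_cancel]
    have h3 := val_add_one_cases hn i
    have h4 := val_add_one_cases hn (i + 1)
    rw [← h2] at h4
    omega
  have hdisj : ∀ c, (c = i - 1 ∨ c = i ∨ c = i + 1) → ¬ (c = j ∨ c = j + 1) := by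
    intro c hc hc'
    have : c ∈ ({i - 1, i, i + 1} : Finset (Fin n)) ∩ {j, j + 1} := by
      simp [hc, hc']
    simp [hij] at this
  have key : ∀ a b, X 0 a * X 1 b - X 0 b * X 1 a ≠ 0 →
      (a = i ∧ (b = j ∨ b = j + 1)) ∨ (b = i ∧ (a = j ∨ a = j + 1)) := by
    intro a b hp
    have e1 := minor_support hn hZ hX (i - 1) (by rwa [sub_add_cancel]) a b hp
    rw [sub_add_cancel] at e1
    have e2 := minor_support hn hZ hX i h2 a b hp
    have e3 := minor_support hn hZ hX j h3 a b hp
    have da := hdisj a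
    have db := hdisj b
    have hab : ¬ (a = i - 1 ∧ a = i + 1) := fun h => hne (h.1.symm.trans h.2)
    have hbb : ¬ (b = i - 1 ∧ b = i + 1) := fun h => hne (h.1.symm.trans h.2)
    clear h1 h2 h3 hij hdisj hp
    generalize i - 1 = i₁, i + 1 = i₂, j + 1 = j₂ at *
    grind
  obtain ⟨c, hc, hpc⟩ : ∃ c, (c = j ∨ c = j + 1) ∧ X 0 i * X 1 c - X 0 c * X 1 i ≠ 0 := by
    obtain ⟨a, b, hp⟩ := exists_minor_ne_zero X hrkX
    rcases key a b hp with ⟨rfl, hb⟩ | ⟨rfl, ha⟩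
    · exact ⟨b, hb, hp⟩
    · exact ⟨a, ha, fun h => hp (by linarith)⟩
  have hci : c ≠ i := fun h => hdisj c (Or.inr (Or.inl h)) hc
  have hcomb : X 1 c • (X * Z) 0 - X 0 c • (X * Z) 1 =
      (X 0 i * X 1 c - X 0 c * X 1 i) • Z i := by
    rw [mul_row, mul_row, Finset.smul_sum, Finset.smul_sum, ← Finset.sum_sub_distrib,
      Finset.sum_eq_single i]
    · rw [smul_smul, smul_smul, ← sub_smul]
      congr 1
      ring
    · intro a _ ha
      have h0 : X 0 a * X 1 c - X 0 c * X 1 a = 0 := by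
        by_contra hp
        rcases key a c hp with h | h
        · exact ha h.1
        · exact hci h.1
      rw [smul_smul, smul_smul, ← sub_smul,
        show X 1 c * X 0 a - X 0 c * X 1 a = 0 by linarith, zero_smul]
    · simp
  refine (Submodule.smul_mem_iff _ hpc).1 ?_
  rw [← hcomb]
  exact Submodule.sub_mem _ (Submodule.smul_mem _ _ (Submodule.subset_span (by simp)))
    (Submodule.smul_mem _ _ (Submodule.subset_span (by simp)))
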